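/- The map β ↦ 2(2−β)/(4 − β + √(16β − 7β²)) is a bijection from (0,2) onto (0,1), whose inverse is the map ᾱ ↦ 2(ᾱ−1)²/(2(ᾱ−1)² + 3ᾱ − 1) from (0,1) onto (0,2). -/

import Mathlib

open Set

/-!
Let `D = 2 * (a - 1) ^ 2 + 3 * a - 1 = 2 * a ^ 2 - a + 1`, which is always positive. Clearing the
denominator turns `β = 2 * (a - 1) ^ 2 / D` into the quadratic equation
`2 * (β - 1) * a ^ 2 + (4 - β) * a + (β - 2) = 0` for `a`, with discriminant `16 * β - 7 * β ^ 2`.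
The map `β ↦ a` of the theorem gives the root at which the derivative of the quadratic is
nonnegative, in the rationalised form `-2 * r / (q + √(q ^ 2 - 4 * p * r))`, which stays valid
when the leading coefficient vanishes, here at `β = 1`. Along `β = 2 * (a - 1) ^ 2 / D` this
derivative equals `2 * (1 - a) * (1 + 3 * a) / D`, so the two maps are mutually inverse between
`β ∈ [0, 16 / 7]`, where the square root is real, and `a ∈ [-1 / 3, 1]`. Both are strictly
decreasing there, and `β = 0, 2` correspond to `a = 1, 0`.
-/

theorem eq_neg_two_mul_div_add_sqrt_discrim_iff {a b c x : ℝ} (hD : 0 ≤ discrim a b c)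
    (hb : b + √(discrim a b c) ≠ 0) :
    x = -2 * c / (b + √(discrim a b c)) ↔
      a * (x * x) + b * x + c = 0 ∧ 0 ≤ 2 * a * x + b := by
  constructor
  · intro hx
    have hs : √(discrim a b c) ^ 2 = b ^ 2 - 4 * a * c := Real.sq_sqrt hD
    have hs_nonneg := Real.sqrt_nonneg (discrim a b c)
    generalize √(discrim a b c) = s at *
    have hderiv : 2 * a * x + b = s := by
      rw [hx]
      field_simp
      linear_combination -hs
    refine ⟨?_, hderiv ▸ hs_nonneg⟩
    rw [hx]
    field_simp
    linear_combination c * hs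
  · rintro ⟨hroot, hderiv⟩
    have hs : √(discrim a b c) = 2 * a * x + b := by
      rw [discrim_eq_sq_of_quadratic_eq_zero hroot, Real.sqrt_sq hderiv]
    rw [eq_div_iff hb, hs]
    linear_combination 2 * hroot

theorem strictAntiOn_of_leftInvOn {α β : Type*} [Preorder α] [LinearOrder β] {f : α → β}
    {g : β → α} {s : Set α} {t : Set β} (hg : StrictAntiOn g t) (hf : MapsTo f s t)
    (hgf : LeftInvOn g f s) : StrictAntiOn f s := by
  intro x hx y hy hxy
  rwa [← hg.lt_iff_gt (hf hx) (hf hy), hgf hx, hgf hy]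

/-- The map `β ↦ ᾱ` of the theorem, studied as a real function on its natural domain
`[0, 16 / 7]`. -/
noncomputable def alphaOf (β : ℝ) : ℝ :=
  2 * (2 - β) / (4 - β + √(16 * β - 7 * β ^ 2))

/-- The rational map `ᾱ ↦ β`, the candidate inverse of `alphaOf`; it is defined on all of `ℝ`
since its denominator has no real zero. -/
noncomputable def betaOf (a : ℝ) : ℝ :=
  2 * (a - 1) ^ 2 / (2 * (a - 1) ^ 2 + 3 * a - 1)

theorem betaOf_denom_pos (a : ℝ) : 0 < 2 * (a - 1) ^ 2 + 3 * a - 1 := by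
  linear_combination (1 / 8) * sq_nonneg (4 * a - 1)

theorem betaOf_eq_iff {a β : ℝ} :
    betaOf a = β ↔ 2 * (β - 1) * (a * a) + (4 - β) * a + (β - 2) = 0 := by
  rw [betaOf, div_eq_iff (betaOf_denom_pos a).ne']
  constructor <;> intro h <;> linear_combination -h

theorem betaOf_mem_Icc (a : ℝ) : betaOf a ∈ Icc (0 : ℝ) (16 / 7) := by
  have hD := betaOf_denom_pos a
  refine ⟨by unfold betaOf; positivity, ?_⟩
  rw [betaOf, div_le_iff₀ hD]
  linear_combination (2 / 7) * sq_nonneg (3 * a + 1)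

theorem quadratic_deriv_betaOf (a : ℝ) :
    2 * (2 * (betaOf a - 1)) * a + (4 - betaOf a) =
      2 * (1 - a) * (1 + 3 * a) / (2 * (a - 1) ^ 2 + 3 * a - 1) := by
  have hquad := betaOf_eq_iff.1 (rfl : betaOf a = betaOf a)
  rw [eq_div_iff (betaOf_denom_pos a).ne']
  linear_combination (4 * a - 1) * hquad

theorem strictAntiOn_betaOf : StrictAntiOn betaOf (Icc (-1 / 3) 1) := by
  rintro a ⟨ha, -⟩ b ⟨-, hb⟩ hab
  rw [betaOf, betaOf, div_lt_div_iff₀ (betaOf_denom_pos b) (betaOf_denom_pos a)]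
  have hfactor : 0 < (1 - b) * (1 + 3 * a) + (1 - a) * (1 + 3 * b) := by
    have := mul_nonneg (sub_nonneg.2 hb) (show 0 ≤ 1 + 3 * a by linarith)
    have := mul_pos (show 0 < 1 - a by linarith) (show 0 < 1 + 3 * b by linarith)
    linarith
  linear_combination mul_pos (sub_pos.2 hab) hfactor

theorem discrim_quadratic (β : ℝ) :
    discrim (2 * (β - 1)) (4 - β) (β - 2) = 16 * β - 7 * β ^ 2 := by
  rw [discrim]
  ring

theorem alphaOf_denom_pos {β : ℝ} (hβ : β < 4) : 0 < 4 - β + √(16 * β - 7 * β ^ 2) :=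
  add_pos_of_pos_of_nonneg (sub_pos.2 hβ) (Real.sqrt_nonneg _)

theorem eq_alphaOf_iff {a β : ℝ} (hβ : β ∈ Icc (0 : ℝ) (16 / 7)) :
    a = alphaOf β ↔ betaOf a = β ∧ 0 ≤ 2 * (2 * (β - 1)) * a + (4 - β) := by
  obtain ⟨hβ₀, hβ₁⟩ := hβ
  have hdisc : 0 ≤ discrim (2 * (β - 1)) (4 - β) (β - 2) := by
    rw [discrim_quadratic]
    linear_combination 7 * mul_nonneg hβ₀ (sub_nonneg.2 hβ₁)
  have hdenom : 4 - β + √(discrim (2 * (β - 1)) (4 - β) (β - 2)) ≠ 0 := by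
    rw [discrim_quadratic]
    exact (alphaOf_denom_pos (by linarith)).ne'
  rw [betaOf_eq_iff, ← eq_neg_two_mul_div_add_sqrt_discrim_iff hdisc hdenom, discrim_quadratic,
    alphaOf, show -2 * (β - 2) = 2 * (2 - β) by ring]

theorem mapsTo_alphaOf_Icc : MapsTo alphaOf (Icc 0 (16 / 7)) (Icc (-1 / 3) 1) := by
  rintro β ⟨hβ₀, hβ₁⟩
  have hdenom := alphaOf_denom_pos (show β < 4 by linarith)
  have hsqrt := Real.sqrt_nonneg (16 * β - 7 * β ^ 2)
  rw [alphaOf, mem_Icc, le_div_iff₀ hdenom, div_le_one hdenom]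
  constructor <;> linarith

theorem invOn_betaOf_alphaOf : InvOn betaOf alphaOf (Icc 0 (16 / 7)) (Icc (-1 / 3) 1) := by
  refine ⟨fun β hβ ↦ ((eq_alphaOf_iff hβ).1 rfl).1, fun a ⟨ha₀, ha₁⟩ ↦ ?_⟩
  refine ((eq_alphaOf_iff (betaOf_mem_Icc a)).2 ⟨rfl, ?_⟩).symm
  rw [quadratic_deriv_betaOf]
  exact div_nonneg (mul_nonneg (by linarith) (by linarith)) (betaOf_denom_pos a).le

theorem strictAntiOn_alphaOf : StrictAntiOn alphaOf (Icc 0 (16 / 7)) :=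
  strictAntiOn_of_leftInvOn strictAntiOn_betaOf mapsTo_alphaOf_Icc invOn_betaOf_alphaOf.1

theorem alphaOf_zero : alphaOf 0 = 1 := by
  norm_num [alphaOf]

theorem alphaOf_two : alphaOf 2 = 0 := by
  norm_num [alphaOf]

theorem stmt8_general {x y : ℝ} (hx : x ∈ Icc (0 : ℝ) (16 / 7)) (hy : y ∈ Icc (0 : ℝ) (16 / 7)) :
    BijOn alphaOf (Ioo x y) (Ioo (alphaOf y) (alphaOf x)) ∧
      InvOn betaOf alphaOf (Ioo x y) (Ioo (alphaOf y) (alphaOf x)) := by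
  have hsource : Icc x y ⊆ Icc 0 (16 / 7) := Icc_subset_Icc hx.1 hy.2
  have htarget : Icc (alphaOf y) (alphaOf x) ⊆ Icc (-1 / 3) 1 :=
    Icc_subset_Icc (mapsTo_alphaOf_Icc hy).1 (mapsTo_alphaOf_Icc hx).2
  have hinv : InvOn betaOf alphaOf (Ioo x y) (Ioo (alphaOf y) (alphaOf x)) :=
    invOn_betaOf_alphaOf.mono (Ioo_subset_Icc_self.trans hsource)
      (Ioo_subset_Icc_self.trans htarget)
  have halpha : MapsTo alphaOf (Ioo x y) (Ioo (alphaOf y) (alphaOf x)) :=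
    (strictAntiOn_alphaOf.mono hsource).mapsTo_Ioo
  have hbeta : MapsTo betaOf (Ioo (alphaOf y) (alphaOf x)) (Ioo x y) := by
    simpa only [invOn_betaOf_alphaOf.1 hx, invOn_betaOf_alphaOf.1 hy] using
      (strictAntiOn_betaOf.mono htarget).mapsTo_Ioo
  exact ⟨hinv.bijOn halpha hbeta, hinv⟩

theorem stmt8 :
    Set.BijOn (fun β : ℝ => 2 * (2 - β) / (4 - β + Real.sqrt (16 * β - 7 * β ^ 2)))
      (Ioo (0 : ℝ) 2) (Ioo (0 : ℝ) 1) ∧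
    (∀ β ∈ Ioo (0 : ℝ) 2,
      (fun a : ℝ => 2 * (a - 1) ^ 2 / (2 * (a - 1) ^ 2 + 3 * a - 1))
        ((fun β : ℝ => 2 * (2 - β) / (4 - β + Real.sqrt (16 * β - 7 * β ^ 2))) β) = β) ∧
    (∀ a ∈ Ioo (0 : ℝ) 1,
      (fun β : ℝ => 2 * (2 - β) / (4 - β + Real.sqrt (16 * β - 7 * β ^ 2)))
        ((fun a : ℝ => 2 * (a - 1) ^ 2 / (2 * (a - 1) ^ 2 + 3 * a - 1)) a) = a) := by
  obtain ⟨hbij, hleft, hright⟩ :=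
    stmt8_general (x := 0) (y := 2) (by norm_num) (by norm_num)
  rw [alphaOf_zero, alphaOf_two] at hbij hright
  exact ⟨hbij, fun _ hβ ↦ hleft hβ, fun _ ha ↦ hright ha⟩
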